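/- The derivation module D(𝒜₂₄₅) of the central hyperplane arrangement 𝒜₂₄₅ in ℂ⁴ with defining equation Q₂₄₅ = x·y·z·w·(x+y+z)·(y+z+w)·(x−y−w)·(x−y+z+w) is not a free module over S = ℂ[x,y,z,w]. -/

import Mathlib

open MvPolynomial

noncomputable section

/-- The polynomial ring `S = ℂ[x,y,z,w]`, with `x = X 0`, `y = X 1`, `z = X 2`, `w = X 3`. -/
abbrev S4 : Type := MvPolynomial (Fin 4) ℂ

/-- The linear form `c₀·x + c₁·y + c₂·z + c₃·w` with coefficient vector `c`. -/
noncomputable def linForm (c : Fin 4 → ℂ) : S4 := ∑ i, C (c i) * X i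

/-- A polynomial derivation `θ = a₁∂ₓ + a₂∂_y + a₃∂_z + a₄∂_w` of `S` is identified with
its coefficient tuple `a : Fin 4 → S`; the linear map `derMap f` sends `a` to `θ(f)`. -/
noncomputable def derMap (f : S4) : (Fin 4 → S4) →ₗ[S4] S4 where
  toFun a := ∑ i, a i * pderiv i f
  map_add' a b := by simp [add_mul, Finset.sum_add_distrib]
  map_smul' c a := by simp [Finset.mul_sum, mul_assoc]

/-- The derivation module `D(𝒜)` of the central arrangement whose hyperplanes are the kernels
of the linear forms `linForm (α H)`: all derivations `θ` with `θ(α_H) ∈ S·α_H` for every `H`. -/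
noncomputable def derivModule {ι : Type} (α : ι → (Fin 4 → ℂ)) :
    Submodule S4 (Fin 4 → S4) :=
  ⨅ H, Submodule.comap (derMap (linForm (α H))) (Ideal.span {linForm (α H)})

end

/-- The coefficient vectors of the eight linear factors of Q = xyzw(x+y+z)(y+z+w)(x-y-w)(x-y+z+w), defining the rigid Cynk–Szemberg octic arrangement 𝒜₂₄₅ ⊂ ℙ³. -/
noncomputable def A245 : Fin 8 → (Fin 4 → ℂ) :=
  ![![1, 0, 0, 0],
    ![0, 1, 0, 0],
    ![0, 0, 1, 0],
    ![0, 0, 0, 1],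
    ![1, 1, 1, 0],
    ![0, 1, 1, 1],
    ![1, -1, 0, -1],
    ![1, -1, 1, 1]]

/-- The point `(0, 0, 0, 1)`, lying on exactly the hyperplanes `x`, `y`, `z`, `x + y + z`. -/
def triplePoint : Fin 4 → ℂ := ![0, 0, 0, 1]

/-- Five functionals on derivations at `triplePoint`: the last coefficient, and derivatives of
order at most two of the first three coefficients. -/
noncomputable def jet (a : Fin 4 → S4) : Fin 5 → ℂ :=
  ![eval triplePoint (a 3),
    eval triplePoint (pderiv 0 (a 0)),
    eval triplePoint (pderiv 0 (pderiv 1 (a 0)) - pderiv 1 (pderiv 2 (a 2))),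
    eval triplePoint (pderiv 0 (pderiv 2 (a 0)) - pderiv 1 (pderiv 2 (a 1))),
    eval triplePoint (pderiv 0 (pderiv 1 (a 1)) - pderiv 0 (pderiv 2 (a 2)))]

/-- The derivations tangent to the four hyperplanes `x`, `y`, `z`, `x + y + z`. -/
structure IsLocallyTangent (a : Fin 4 → S4) : Prop where
  dvd_zero : (X 0 : S4) ∣ a 0
  dvd_one : (X 1 : S4) ∣ a 1
  dvd_two : (X 2 : S4) ∣ a 2
  dvd_sum : (X 0 + X 1 + X 2 : S4) ∣ a 0 + a 1 + a 2

lemma linForm_eq (c : Fin 4 → ℂ) :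
    linForm c = C (c 0) * X 0 + C (c 1) * X 1 + C (c 2) * X 2 + C (c 3) * X 3 := by
  simp [linForm, Fin.sum_univ_four]

lemma derMap_linForm (c : Fin 4 → ℂ) (a : Fin 4 → S4) :
    derMap (linForm c) a = a 0 * C (c 0) + a 1 * C (c 1) + a 2 * C (c 2) + a 3 * C (c 3) := by
  simp [linForm_eq, derMap, Fin.sum_univ_four, pderiv_X, Pi.single_apply]

lemma mem_derivModule {ι : Type} (α : ι → (Fin 4 → ℂ)) (a : Fin 4 → S4) :
    a ∈ derivModule α ↔ ∀ H, linForm (α H) ∣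
      a 0 * C (α H 0) + a 1 * C (α H 1) + a 2 * C (α H 2) + a 3 * C (α H 3) := by
  simp only [derivModule, Submodule.mem_iInf, Submodule.mem_comap, Ideal.mem_span_singleton,
    derMap_linForm]

lemma isLocallyTangent_of_mem {a : Fin 4 → S4} (ha : a ∈ derivModule A245) :
    IsLocallyTangent a := by
  rw [mem_derivModule] at ha
  constructor
  · simpa [linForm_eq, A245] using ha 0
  · simpa [linForm_eq, A245] using ha 1
  · simpa [linForm_eq, A245] using ha 2
  · simpa [linForm_eq, A245] using ha 4

/-- The product of the linear forms of `A245` not vanishing at `triplePoint`. -/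
noncomputable def cofactor : S4 :=
  ∏ H ∈ {3, 5, 6, 7}, linForm (A245 H)

lemma cofactor_smul_mem {a : Fin 4 → S4} (ha : IsLocallyTangent a) :
    cofactor • a ∈ derivModule A245 := by
  rw [mem_derivModule]
  intro H
  simp only [Pi.smul_apply, smul_eq_mul, mul_assoc, ← mul_add]
  by_cases hH : H ∈ ({3, 5, 6, 7} : Finset (Fin 8))
  · exact (Finset.dvd_prod_of_mem (fun H => linForm (A245 H)) hH).mul_right _
  · refine Dvd.dvd.mul_left ?_ _
    obtain ⟨h0, h1, h2, h4⟩ := ha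
    fin_cases H
    · simpa [linForm_eq, A245] using h0
    · simpa [linForm_eq, A245] using h1
    · simpa [linForm_eq, A245] using h2
    · simp at hH
    · simpa [linForm_eq, A245] using h4
    all_goals simp at hH

lemma eval_cofactor : eval triplePoint cofactor = -1 := by
  simp [cofactor, linForm_eq, A245, triplePoint]

lemma jet_add (a b : Fin 4 → S4) : jet (a + b) = jet a + jet b := by
  ext i
  fin_cases i <;> simp [jet] <;> ring

lemma jet_smul (q : S4) {a : Fin 4 → S4} (ha : IsLocallyTangent a) :
    jet (q • a) = eval triplePoint q • jet a := by
  obtain ⟨⟨g0, h0⟩, ⟨g1, h1⟩, ⟨g2, h2⟩, ⟨g4, h4⟩⟩ := ha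
  rw [h0, h1, h2] at h4
  have k0 := congrArg (fun f => eval triplePoint (pderiv 0 f)) h4
  have k1 := congrArg (fun f => eval triplePoint (pderiv 1 f)) h4
  have k2 := congrArg (fun f => eval triplePoint (pderiv 2 f)) h4
  simp [pderiv_X, triplePoint] at k0 k1 k2
  ext i
  fin_cases i <;>
    simp [jet, h0, h1, h2, pderiv_X, triplePoint, k0, k1, k2] <;> ring

instance ringHomSurjective_eval {σ R : Type*} [CommSemiring R] (p : σ → R) :
    RingHomSurjective (eval p) :=
  ⟨fun c => ⟨C c, eval_C c⟩⟩

/-- `jet` as a map on `derivModule A245`, semilinear along evaluation at `triplePoint`. -/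
noncomputable def jetMap : derivModule A245 →ₛₗ[eval triplePoint] (Fin 5 → ℂ) where
  toFun a := jet a
  map_add' a b := jet_add a b
  map_smul' q a := jet_smul q (isLocallyTangent_of_mem a.2)

lemma jet_mem_range {a : Fin 4 → S4} (ha : IsLocallyTangent a) :
    jet a ∈ LinearMap.range jetMap := by
  refine ⟨-(⟨cofactor • a, cofactor_smul_mem ha⟩ : derivModule A245), ?_⟩
  rw [map_neg]
  change -jet (cofactor • a) = jet a
  rw [jet_smul _ ha, eval_cofactor]
  simp

lemma jetMap_surjective : LinearMap.range jetMap = ⊤ := by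
  have e1 := jet_mem_range (a := ![0, 0, 0, 1]) ⟨by simp, by simp, by simp, by simp⟩
  have e2 := jet_mem_range (a := ![X 0, X 1, X 2, 0]) ⟨by simp, by simp, by simp, by simp⟩
  have e3 := jet_mem_range (a := ![X 0 * X 1, -(X 0 * X 1), 0, 0])
    ⟨by simp, by simp, by simp, by simp⟩
  have e4 := jet_mem_range (a := ![X 0 * X 2, 0, -(X 0 * X 2), 0])
    ⟨by simp, by simp, by simp, by simp⟩
  have e5 := jet_mem_range (a := ![0, X 1 * X 2, -(X 1 * X 2), 0])
    ⟨by simp, by simp, by simp, by simp⟩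
  rw [eq_top_iff]
  rintro v -
  have key := add_mem (add_mem (add_mem (add_mem
    (Submodule.smul_mem _ (v 0) e1) (Submodule.smul_mem _ (v 1) e2))
    (Submodule.smul_mem _ ((v 2 + v 3 - v 4) / 2) e3))
    (Submodule.smul_mem _ ((v 2 + v 3 + v 4) / 2) e4))
    (Submodule.smul_mem _ ((v 2 - v 3 + v 4) / 2) e5)
  convert key using 1
  ext i
  fin_cases i <;>
    simp [jet, pderiv_X, triplePoint] <;> ring

/-- A free module over a nontrivial commutative ring that embeds in `Fin m → R` has no
semilinear surjection, along a ring homomorphism to a field `K`, onto `Fin n → K` for `m < n`. -/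
lemma not_free_of_semilinear_surjection {R K : Type*} [CommRing R] [Nontrivial R] [Field K]
    {σ : R →+* K} [RingHomSurjective σ] {m n : ℕ} (hmn : m < n) (N : Submodule R (Fin m → R))
    (f : N →ₛₗ[σ] (Fin n → K)) (hf : LinearMap.range f = ⊤) : ¬ Module.Free R N := by
  intro hfree
  let b := Module.Free.chooseBasis R N
  have hli : LinearIndependent R (fun i => (b i : Fin m → R)) :=
    b.linearIndependent.map' N.subtype N.ker_subtype
  have hfin : Finite (Module.Free.ChooseBasisIndex R N) :=
    Cardinal.lt_aleph0_iff_finite.mp hli.lt_aleph0_of_finite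
  have := Fintype.ofFinite (Module.Free.ChooseBasisIndex R N)
  have hspan : Submodule.span K (Set.range (f ∘ b)) = ⊤ := by
    rw [Set.range_comp, ← Submodule.map_span, b.span_eq, Submodule.map_top, hf]
  have h1 := finrank_range_le_card (R := K) (f ∘ b)
  rw [Set.finrank, hspan, finrank_top, Module.finrank_fin_fun] at h1
  have h2 := hli.fintype_card_le_finrank
  rw [Module.finrank_fin_fun] at h2
  omega

/-- The derivation module of 𝒜₂₄₅ is not a free `S`-module. -/
theorem not_free_A245 : ¬ Module.Free S4 ↥(derivModule A245) := by
  exact not_free_of_semilinear_surjection (by norm_num) _ jetMap jetMap_surjective
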